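/- For vectors of indeterminates x = (x_1,...,x_k) and λ = (λ_1,...,λ_k), and positive integers n, k, the determinant of the matrix indexed by compositions α, β of n into k non-negative parts, with entry ∏_{i=1}^k (x_i+λ_i α_i)^{β_i}, equals (∏_{j=1}^k λ_j)^{binom(n+k-1,k)} · (n + Σ_{j=1}^k x_j/λ_j)^{binom(n+k-1,k)} · ∏_{i=1}^n i^{(k-1)·binom(n+k-i-1,k-1)}. -/

import Mathlib

open Finset

/-- The polynomial binomial coefficient `y(y-1)⋯(y-m+1)/m!`. -/
noncomputable def bch {F : Type*} [Field F] (y : F) (m : ℕ) : F :=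
  (∏ j ∈ Finset.range m, (y - (j : F))) / (m.factorial : F)

/-- Compositions of `n` into `k` non-negative parts. -/
abbrev Comp (n k : ℕ) := {f : Fin k → Fin (n + 1) // ∑ i, (f i : ℕ) = n}

/-- Compositions of `n` into `k` strictly positive parts. -/
abbrev CompPos (n k : ℕ) :=
  {f : Fin k → Fin (n + 1) // (∑ i, (f i : ℕ)) = n ∧ ∀ i, 0 < (f i : ℕ)}

theorem det_tri {F : Type*} [Field F] {m : Type*} [Fintype m] [DecidableEq m]
    (M : Matrix m m F) (f : m → ℕ) (h : ∀ i j, i ≠ j → M i j ≠ 0 → f i < f j) :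
    M.det = ∏ i, M i i := by
  classical
  let e := Fintype.equivFin m
  let g : m → ℕ ×ₗ Fin (Fintype.card m) := fun i => toLex (f i, e i)
  have hg : Function.Injective g := by
    intro a b hab
    have h1 : (f a, e a) = (f b, e b) := toLex.injective hab
    exact e.injective (Prod.ext_iff.1 h1).2
  let _ : LinearOrder m := LinearOrder.lift' g hg
  have key : ∀ i j : m, j < i → M i j = 0 := by
    intro i j hij
    by_contra hne
    have h1 : g j < g i := hij
    have h2 := h i j (by rintro rfl; exact lt_irrefl _ h1) hne
    rw [Prod.Lex.toLex_lt_toLex] at h1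
    simp only at h1
    omega
  have := Matrix.det_of_isUpperTriangular (M := M) (fun i j hij => key i j hij)
  convert this

theorem mkComp {n k : ℕ} (f : Fin k → ℕ) (h : ∑ i, f i = n) :
    ∃ γ : Comp n k, ∀ i, ((γ.1 i : ℕ)) = f i := by
  have hf : ∀ i, f i < n + 1 := fun i => by
    have := Finset.single_le_sum (f := f) (fun j _ => Nat.zero_le _) (Finset.mem_univ i)
    omega
  exact ⟨⟨fun i => ⟨f i, hf i⟩, by simpa using h⟩, fun i => rfl⟩

theorem Comp_ext {n k : ℕ} {a b : Comp n k} (h : ∀ i, (a.1 i : ℕ) = (b.1 i : ℕ)) : a = b := by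
  apply Subtype.ext
  funext i
  exact Fin.ext (h i)

theorem sum_comp_eq {A ι : Type*} [AddCommMonoid A] {n k : ℕ} (t : Finset ι) (g : ι → A)
    (G : Comp n k → A) (e : ι → Fin k → ℕ)
    (he : ∀ c ∈ t, ∀ d ∈ t, (∀ i, e c i = e d i) → c = d)
    (hs : ∀ c ∈ t, ∑ i, e c i = n)
    (hG : ∀ c ∈ t, ∀ γ : Comp n k, (∀ i, (γ.1 i : ℕ) = e c i) → G γ = g c)
    (h0 : ∀ γ : Comp n k, G γ ≠ 0 → ∃ c ∈ t, ∀ i, (γ.1 i : ℕ) = e c i) :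
    ∑ γ, G γ = ∑ c ∈ t, g c := by
  classical
  choose φ hφ using fun (c : t) => mkComp (e c.1) (hs c.1 c.2)
  rw [← Finset.sum_coe_sort t]
  symm
  refine Finset.sum_of_injOn φ ?_ ?_ ?_ ?_
  · intro c _ d _ hcd
    apply Subtype.ext
    refine he _ c.2 _ d.2 fun i => ?_
    rw [← hφ c, ← hφ d, hcd]
  · intro c _
    simp
  · intro γ _ hγ
    by_contra hne
    obtain ⟨c, hc, hci⟩ := h0 γ hne
    apply hγ
    refine ⟨⟨c, hc⟩, by simp, ?_⟩
    exact Comp_ext fun i => by rw [hφ, hci]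
  · intro c _
    exact (hG c.1 c.2 _ (hφ c)).symm

theorem count_ge {n m j : ℕ} (hj : j ≤ n) (i : Fin (m + 1)) :
    (∑ γ : Comp n (m + 1), if j ≤ (γ.1 i : ℕ) then 1 else 0) = (n + m - j).choose m := by
  rw [sum_comp_eq (Finset.finsuppAntidiag (Finset.univ : Finset (Fin (m + 1))) (n - j))
    (fun _ => 1) _ (fun c a => c a + if a = i then j else 0)]
  · rw [Finset.sum_const, Finset.card_finsuppAntidiag_nat_eq_choose]
    simp only [Finset.card_univ, Fintype.card_fin, smul_eq_mul, mul_one]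
    rw [show m + 1 + (n - j) - 1 = m + (n - j) by omega, show n + m - j = m + (n - j) by omega,
      Nat.choose_symm_add]
  · intro c _ d _ h
    ext a
    simpa using h a
  · intro c hc
    rw [Finset.mem_finsuppAntidiag] at hc
    rw [Finset.sum_add_distrib, hc.1]
    simp
    omega
  · intro c _ γ h
    rw [h i]
    simp
  · intro γ h
    have h' : j ≤ (γ.1 i : ℕ) := by
      by_contra hh
      simp [hh] at h
    have key : ∀ a, (γ.1 a : ℕ) = ((γ.1 a : ℕ) - if a = i then j else 0) +
        if a = i then j else 0 := by
      intro a
      by_cases ha : a = i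
      · subst ha; simp; omega
      · simp [ha]
    refine ⟨Finsupp.equivFunOnFinite.symm
      (fun a => (γ.1 a : ℕ) - if a = i then j else 0), ?_, ?_⟩
    · rw [Finset.mem_finsuppAntidiag]
      refine ⟨?_, by simp⟩
      have h2 := γ.2
      rw [Finset.sum_congr rfl (fun a _ => key a), Finset.sum_add_distrib] at h2
      simp at h2
      simp
      omega
    · intro a
      simpa using key a

theorem sum_part {n m : ℕ} (i : Fin (m + 1)) :
    (∑ γ : Comp n (m + 1), (γ.1 i : ℕ)) = (n + m).choose (m + 1) := by
  have h1 : ∀ γ : Comp n (m + 1), (γ.1 i : ℕ) =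
      ∑ j ∈ Finset.range n, if j + 1 ≤ (γ.1 i : ℕ) then 1 else 0 := by
    intro γ
    have hlt := (γ.1 i).2
    rw [← Finset.card_filter]
    have : (Finset.range n).filter (fun j => j + 1 ≤ (γ.1 i : ℕ)) =
        Finset.range (γ.1 i : ℕ) := by
      ext j; simp; omega
    rw [this, Finset.card_range]
  rw [Finset.sum_congr rfl (fun γ _ => h1 γ), Finset.sum_comm]
  rw [Finset.sum_congr rfl (fun j hj => count_ge (Nat.succ_le_of_lt (Finset.mem_range.1 hj)) i)]
  rcases n with _ | n
  · simp
  · rw [← Finset.sum_range_reflect]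
    rw [show n + 1 + m = n + m + 1 by omega, ← Nat.sum_range_add_choose]
    refine Finset.sum_congr rfl fun j hj => ?_
    rw [Finset.mem_range] at hj
    congr 1
    omega

theorem prod_Icc_fact (a : ℕ) : ∏ j ∈ Finset.Icc 1 a, j = a.factorial := by
  induction a with
  | zero => simp
  | succ a ih => rw [Finset.prod_Icc_succ_top (by omega), ih, Nat.factorial_succ, mul_comm]

theorem prod_fact {F : Type*} [Field F] {n m : ℕ} (i : Fin (m + 1)) :
    (∏ γ : Comp n (m + 1), ((γ.1 i : ℕ).factorial : F)) =
      ∏ j ∈ Finset.Icc 1 n, (j : F) ^ ((n + m - j).choose m) := by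
  have h1 : ∀ γ : Comp n (m + 1), ((γ.1 i : ℕ).factorial : F) =
      ∏ j ∈ Finset.Icc 1 n, (j : F) ^ (if j ≤ (γ.1 i : ℕ) then 1 else 0) := by
    intro γ
    have hlt := (γ.1 i).2
    rw [← prod_Icc_fact, Nat.cast_prod]
    have : Finset.Icc 1 (γ.1 i : ℕ) =
      (Finset.Icc 1 n).filter (fun j => j ≤ (γ.1 i : ℕ)) := by
      ext j; simp; omega
    rw [this, Finset.prod_filter]
    refine Finset.prod_congr rfl fun j _ => ?_
    split_ifs <;> simp
  rw [Finset.prod_congr rfl (fun γ _ => h1 γ), Finset.prod_comm]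
  refine Finset.prod_congr rfl fun j hj => ?_
  rw [Finset.prod_pow_eq_pow_sum, count_ge (Finset.mem_Icc.1 hj).2]

/-- Coefficients expressing `(y + a)^b` in falling factorials of `a`. -/
def vco {F : Type*} [Field F] (y : F) : ℕ → ℕ → F
  | 0, 0 => 1
  | 0, _ + 1 => 0
  | b + 1, 0 => y * vco y b 0
  | b + 1, c + 1 => vco y b c + (y + ((c + 1 : ℕ) : F)) * vco y b (c + 1)

theorem vco_gt {F : Type*} [Field F] (y : F) : ∀ b c, b < c → vco y b c = 0 := by
  intro b
  induction b with
  | zero =>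
    intro c hc
    obtain ⟨c, rfl⟩ := Nat.exists_eq_succ_of_ne_zero (by omega : c ≠ 0)
    rfl
  | succ b ih =>
    intro c hc
    obtain ⟨c, rfl⟩ := Nat.exists_eq_succ_of_ne_zero (by omega : c ≠ 0)
    simp only [Nat.succ_eq_add_one] at *
    rw [vco, ih c (by omega), ih (c + 1) (by omega)]
    simp

theorem vco_self {F : Type*} [Field F] (y : F) : ∀ b, vco y b b = 1 := by
  intro b
  induction b with
  | zero => rfl
  | succ b ih => rw [vco, ih, vco_gt y b (b + 1) (by omega)]; simp

theorem desc_step {F : Type*} [Field F] (a c : ℕ) :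
    (a : F) * (a.descFactorial c : F) =
      (a.descFactorial (c + 1) : F) + c * (a.descFactorial c : F) := by
  rw [Nat.descFactorial_succ]
  rcases le_or_gt c a with h | h
  · push_cast [h]
    ring
  · rw [Nat.descFactorial_of_lt h]; simp

theorem vco_sum {F : Type*} [Field F] (y : F) (a : ℕ) : ∀ b,
    ∑ c ∈ Finset.range (b + 1), vco y b c * (a.descFactorial c : F) = (y + a) ^ b := by
  intro b
  induction b with
  | zero => simp [vco]
  | succ b ih =>
    rw [pow_succ, ← ih, Finset.sum_mul, Finset.sum_range_succ']
    simp only [vco]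
    have h1 : ∀ c, vco y b c * (a.descFactorial c : F) * (y + a) =
        vco y b c * (a.descFactorial (c + 1) : F) +
          (y + (c : F)) * vco y b c * (a.descFactorial c : F) := by
      intro c
      have := desc_step (F := F) a c
      linear_combination vco y b c * this
    simp only [h1, add_mul, Finset.sum_add_distrib]
    rw [add_assoc]
    congr 1
    have h2 := Finset.sum_range_succ'
      (fun c => (y + (c : F)) * vco y b c * (a.descFactorial c : F)) (b + 1)
    have h3 := Finset.sum_range_succ
      (fun c => (y + (c : F)) * vco y b c * (a.descFactorial c : F)) (b + 1)
    rw [vco_gt y b (b + 1) (by omega)] at h3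
    simp only [add_mul, Finset.sum_add_distrib] at h2 h3 ⊢
    simp only [Nat.cast_zero, mul_zero, zero_mul, add_zero] at h2 h3
    rw [← h3, h2]

section main

variable {F : Type*} [Field F] (n m : ℕ) (y : Fin (m + 1) → F)

theorem comp_sum {n m : ℕ} (γ : Comp n (m + 1)) :
    (γ.1 0 : ℕ) + ∑ i : Fin m, (γ.1 i.succ : ℕ) = n := by
  rw [← Fin.sum_univ_succ (fun i => (γ.1 i : ℕ))]
  exact γ.2

theorem comp_lt {n m : ℕ} {a b : Comp n (m + 1)} (hne : a ≠ b)
    (h : ∀ i : Fin m, (a.1 i.succ : ℕ) ≤ (b.1 i.succ : ℕ)) :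
    (b.1 0 : ℕ) < (a.1 0 : ℕ) := by
  have ha := comp_sum a
  have hb := comp_sum b
  have hle := Finset.sum_le_sum (fun i (_ : i ∈ (Finset.univ : Finset (Fin m))) => h i)
  by_contra hcon
  have heq : ∑ i : Fin m, (a.1 i.succ : ℕ) = ∑ i : Fin m, (b.1 i.succ : ℕ) := by omega
  have h2 := (Finset.sum_eq_sum_iff_of_le (fun i _ => h i)).1 heq
  apply hne
  apply Comp_ext
  intro i
  refine Fin.cases ?_ (fun i => ?_) i
  · omega
  · exact h2 i (Finset.mem_univ _)

theorem det_C : Matrix.det (Matrix.of fun α β : Comp n (m + 1) =>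
      ∏ i : Fin m, ((α.1 i.succ : ℕ).descFactorial (β.1 i.succ : ℕ) : F)) =
    ∏ j ∈ Finset.Icc 1 n, (j : F) ^ (m * (n + m - j).choose m) := by
  rw [det_tri _ (fun α => (α.1 0 : ℕ))]
  · simp only [Matrix.of_apply, Nat.descFactorial_self]
    rw [Finset.prod_comm]
    simp only [prod_fact, Finset.prod_const, Finset.card_univ, Fintype.card_fin]
    rw [← Finset.prod_pow]
    refine Finset.prod_congr rfl fun j _ => ?_
    rw [← pow_mul, mul_comm]
  · intro α β hne h
    apply comp_lt hne.symm
    intro i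
    rw [Matrix.of_apply, Finset.prod_ne_zero_iff] at h
    by_contra hlt
    apply h i (Finset.mem_univ _)
    rw [Nat.descFactorial_of_lt (by omega)]
    simp

theorem det_V : Matrix.det (Matrix.of fun γ β : Comp n (m + 1) =>
      ∏ i : Fin m, vco (y i.succ) (β.1 i.succ : ℕ) (γ.1 i.succ : ℕ)) = 1 := by
  rw [det_tri _ (fun α => n - (α.1 0 : ℕ))]
  · simp only [Matrix.of_apply, vco_self, Finset.prod_const_one]
  · intro α β hne h
    have : (β.1 0 : ℕ) < (α.1 0 : ℕ) := by
      apply comp_lt hne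
      intro i
      rw [Matrix.of_apply, Finset.prod_ne_zero_iff] at h
      by_contra hlt
      apply h i (Finset.mem_univ _)
      rw [vco_gt _ _ _ (by omega)]
    have := comp_sum α
    omega

theorem B_eq : (Matrix.of fun α β : Comp n (m + 1) =>
      ∏ i : Fin m, (y i.succ + ((α.1 i.succ : ℕ) : F)) ^ (β.1 i.succ : ℕ)) =
    (Matrix.of fun α β : Comp n (m + 1) =>
      ∏ i : Fin m, ((α.1 i.succ : ℕ).descFactorial (β.1 i.succ : ℕ) : F)) *
    (Matrix.of fun γ β : Comp n (m + 1) =>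
      ∏ i : Fin m, vco (y i.succ) (β.1 i.succ : ℕ) (γ.1 i.succ : ℕ)) := by
  ext α β
  rw [Matrix.mul_apply]
  simp only [Matrix.of_apply, ← vco_sum]
  rw [Finset.prod_univ_sum]
  symm
  have hle : ∀ c ∈ Fintype.piFinset fun i : Fin m => Finset.range ((β.1 i.succ : ℕ) + 1),
      ∑ i, c i ≤ n := by
    intro c hc
    rw [Fintype.mem_piFinset] at hc
    have := comp_sum β
    have : ∑ i, c i ≤ ∑ i : Fin m, (β.1 i.succ : ℕ) := Finset.sum_le_sum fun i _ => by
      have := Finset.mem_range.1 (hc i)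
      omega
    omega
  apply sum_comp_eq _ _ _ (fun c => Fin.cons (n - ∑ i, c i) c)
  · intro c _ d _ h
    funext i
    simpa using h i.succ
  · intro c hc
    have := hle c hc
    rw [Fin.sum_univ_succ]
    simp
    omega
  · intro c hc γ h
    rw [← Finset.prod_mul_distrib]
    refine Finset.prod_congr rfl fun i _ => ?_
    rw [h i.succ, Fin.cons_succ, mul_comm]
  · intro γ h
    refine ⟨fun i => (γ.1 i.succ : ℕ), ?_, ?_⟩
    · rw [Fintype.mem_piFinset]
      intro i
      rw [Finset.mem_range]
      have h2 := right_ne_zero_of_mul h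
      rw [Finset.prod_ne_zero_iff] at h2
      by_contra hlt
      apply h2 i (Finset.mem_univ _)
      rw [vco_gt _ _ _ (by omega)]
    · intro i
      have := comp_sum γ
      refine Fin.cases ?_ (fun i => ?_) i
      · simp; omega
      · simp

/-- Coefficients expressing `(∑ z)^{β 0} ∏ z_i^{β i}` in monomials. -/
def uco (F : Type*) [Field F] {n m : ℕ} (γ β : Comp n (m + 1)) : F :=
  if ∀ i : Fin m, (β.1 i.succ : ℕ) ≤ (γ.1 i.succ : ℕ) then
    (Nat.multinomial Finset.univ
      (Fin.cons (γ.1 0 : ℕ) (fun i : Fin m => (γ.1 i.succ : ℕ) - (β.1 i.succ : ℕ))) : F) else 0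

theorem det_U : Matrix.det (Matrix.of fun γ β : Comp n (m + 1) => uco F γ β) = 1 := by
  rw [det_tri _ (fun α => (α.1 0 : ℕ))]
  · apply Finset.prod_eq_one
    intro γ _
    simp only [Matrix.of_apply, uco, le_refl, implies_true, if_true, Nat.sub_self]
    have h := Nat.multinomial_spec (Finset.univ : Finset (Fin (m + 1)))
      (Fin.cons (γ.1 0 : ℕ) (fun i : Fin m => 0))
    rw [Fin.prod_univ_succ, Fin.sum_univ_succ] at h
    simp only [Fin.cons_zero, Fin.cons_succ, Nat.factorial_zero, Finset.prod_const_one,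
      Finset.sum_const_zero, mul_one, add_zero] at h
    rw [Nat.eq_of_mul_eq_mul_left (Nat.factorial_pos _) (h.trans (mul_one _).symm)]
    simp
  · intro α β hne h
    apply comp_lt hne.symm
    by_contra hh
    exact h (by rw [Matrix.of_apply, uco, if_neg hh])

theorem U_sum (z : Fin (m + 1) → F) (β : Comp n (m + 1)) :
    ∑ γ : Comp n (m + 1), (∏ i, z i ^ (γ.1 i : ℕ)) * uco F γ β =
      (∑ i, z i) ^ (β.1 0 : ℕ) * ∏ i : Fin m, z i.succ ^ (β.1 i.succ : ℕ) := by
  rw [Finset.sum_pow_eq_sum_piAntidiag, Finset.sum_mul]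
  have hb := comp_sum β
  apply sum_comp_eq _ _ _
    (fun c => Fin.cons (c 0) (fun i : Fin m => c i.succ + (β.1 i.succ : ℕ)))
  · intro c _ d _ h
    funext i
    refine Fin.cases ?_ (fun i => ?_) i
    · simpa using h 0
    · simpa using h i.succ
  · intro c hc
    have hc := (Finset.mem_piAntidiag.1 hc).1
    rw [Fin.sum_univ_succ] at hc ⊢
    simp only [Fin.cons_zero, Fin.cons_succ, Finset.sum_add_distrib]
    omega
  · intro c hc γ h
    have h0 := h 0
    have hs := fun i : Fin m => h i.succ
    simp only [Fin.cons_zero, Fin.cons_succ] at h0 hs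
    have hcons : (Fin.cons (c 0) (fun i : Fin m => c i.succ) : Fin (m + 1) → ℕ) = c :=
      Fin.cons_self_tail c
    simp only [uco, hs, h0, Nat.le_add_left, implies_true, if_true, Nat.add_sub_cancel,
      Fin.prod_univ_succ, pow_add, Finset.prod_mul_distrib, hcons]
    ring
  · intro γ h
    have h2 := right_ne_zero_of_mul h
    have hle : ∀ i : Fin m, (β.1 i.succ : ℕ) ≤ (γ.1 i.succ : ℕ) := by
      by_contra hh
      exact h2 (by rw [uco, if_neg hh])
    refine ⟨Fin.cons (γ.1 0 : ℕ) (fun i : Fin m => (γ.1 i.succ : ℕ) - (β.1 i.succ : ℕ)), ?_, ?_⟩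
    · rw [Finset.mem_piAntidiag]
      refine ⟨?_, by simp⟩
      rw [Fin.sum_univ_succ]
      simp only [Fin.cons_zero, Fin.cons_succ]
      have hg := comp_sum γ
      have : ∑ i : Fin m, (γ.1 i.succ : ℕ) = ∑ i : Fin m, ((γ.1 i.succ : ℕ) - (β.1 i.succ : ℕ))
          + ∑ i : Fin m, (β.1 i.succ : ℕ) := by
        rw [← Finset.sum_add_distrib]
        exact Finset.sum_congr rfl fun i _ => by have := hle i; omega
      omega
    · intro i
      refine Fin.cases ?_ (fun i => ?_) i
      · simp
      · have := hle i
        simp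
        omega

theorem det_M : Matrix.det (Matrix.of fun α β : Comp n (m + 1) =>
        ∏ i, (y i + ((α.1 i : ℕ) : F)) ^ ((β.1 i : ℕ))) =
      ((n : F) + ∑ j, y j) ^ ((n + m).choose (m + 1)) *
        ∏ j ∈ Finset.Icc 1 n, (j : F) ^ (m * (n + m - j).choose m) := by
  have h1 : (Matrix.of fun α β : Comp n (m + 1) =>
        ∏ i, (y i + ((α.1 i : ℕ) : F)) ^ ((β.1 i : ℕ))) *
      (Matrix.of fun γ β : Comp n (m + 1) => uco F γ β) =
      Matrix.of fun α β : Comp n (m + 1) => ((n : F) + ∑ j, y j) ^ (β.1 0 : ℕ) *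
        (Matrix.of fun α β : Comp n (m + 1) =>
          ∏ i : Fin m, (y i.succ + ((α.1 i.succ : ℕ) : F)) ^ (β.1 i.succ : ℕ)) α β := by
    ext α β
    rw [Matrix.mul_apply]
    simp only [Matrix.of_apply]
    rw [U_sum n m (fun i => y i + ((α.1 i : ℕ) : F)) β]
    have : (n : F) + ∑ j, y j = ∑ i, (y i + ((α.1 i : ℕ) : F)) := by
      rw [Finset.sum_add_distrib, ← Nat.cast_sum, α.2, add_comm]
    rw [this]
  have h2 := congrArg Matrix.det h1
  rw [Matrix.det_mul, det_U, mul_one, Matrix.det_mul_row, B_eq, Matrix.det_mul, det_V, mul_one,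
    det_C, Finset.prod_pow_eq_pow_sum, sum_part] at h2
  exact h2

end main

theorem stmt10 {F : Type*} [Field F] [CharZero F] (n k : ℕ) (hn : 0 < n) (hk : 0 < k)
    (x l : Fin k → F) (hl : ∀ j, l j ≠ 0) :
    Matrix.det (Matrix.of fun α β : Comp n k =>
        ∏ i, (x i + l i * ((α.1 i : ℕ) : F)) ^ ((β.1 i : ℕ))) =
      (∏ j, l j) ^ ((n + k - 1).choose k) *
        ((n : F) + ∑ j, x j / l j) ^ ((n + k - 1).choose k) *
        ∏ i ∈ Finset.Icc 1 n, (i : F) ^ ((k - 1) * (n + k - i - 1).choose (k - 1)) := by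
  obtain ⟨m, rfl⟩ := Nat.exists_eq_succ_of_ne_zero hk.ne'
  simp only [Nat.succ_eq_add_one] at *
  have h1 : (Matrix.of fun α β : Comp n (m + 1) =>
        ∏ i, (x i + l i * ((α.1 i : ℕ) : F)) ^ ((β.1 i : ℕ))) =
      Matrix.of fun α β : Comp n (m + 1) => (∏ i, l i ^ (β.1 i : ℕ)) *
        (Matrix.of fun α β : Comp n (m + 1) =>
          ∏ i, (x i / l i + ((α.1 i : ℕ) : F)) ^ ((β.1 i : ℕ))) α β := by
    ext α β
    simp only [Matrix.of_apply]
    rw [← Finset.prod_mul_distrib]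
    refine Finset.prod_congr rfl fun i _ => ?_
    rw [← mul_pow, mul_add, mul_div_cancel₀ _ (hl i)]
  rw [h1, Matrix.det_mul_row, det_M n m (fun i => x i / l i), Finset.prod_comm]
  simp only [Finset.prod_pow_eq_pow_sum, sum_part]
  rw [Finset.prod_pow, mul_assoc]
  simp only [show n + (m + 1) - 1 = n + m by omega, Nat.add_sub_cancel,
    show ∀ i, n + (m + 1) - i - 1 = n + m - i from fun i => by omega]
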